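/- Triviality of the global isotropy group: under the hypotheses that 𝕋₁, 𝕋₂ are equational theories over disjoint signatures each possessing a function symbol that is neither constant nor a projection, the group Aut(Id_{(𝕋₁+𝕋₂)mod}) of natural automorphisms of the identity functor on the category of (𝕋₁+𝕋₂)-models is the trivial group. -/

import Mathlib

/-- First-order terms over symbols `S` with arity `ar` and variables `V`. -/
inductive Tm (S : Type) (ar : S → ℕ) (V : Type) : Type
  | var : V → Tm S ar V
  | app : (f : S) → (Fin (ar f) → Tm S ar V) → Tm S ar V

namespace Tm
variable {S : Type} {ar : S → ℕ} {V W : Type}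

def mapVar (g : V → W) : Tm S ar V → Tm S ar W
  | var v => var (g v)
  | app f ts => app f (fun i => (ts i).mapVar g)

def bind : Tm S ar V → (V → Tm S ar W) → Tm S ar W
  | var v, g => g v
  | app f ts, g => app f (fun i => (ts i).bind g)

/-- All variables of a term belong to a given set. -/
def VarsIn : Tm S ar V → Set V → Prop
  | var v, A => v ∈ A
  | app _ ts, A => ∀ i, VarsIn (ts i) A

/-- The term contains at least one variable. -/
def HasVar : Tm S ar V → Prop
  | var _ => True
  | app _ ts => ∃ i, HasVar (ts i)

end Tm

/-- The combined signature: operation symbols of the two theories (`op`),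
generator constants `y₁,…,yₙ` (`gen`), and indeterminate constants `x = ind 0`,
`xᵢ = ind i` (`ind`). -/
inductive CSym (F : Bool → Type) (n : ℕ) : Type
  | op : (b : Bool) → F b → CSym F n
  | gen : Fin n → CSym F n
  | ind : ℕ → CSym F n

namespace CSym
variable {F : Bool → Type} {n : ℕ}

def arity (arF : ∀ b, F b → ℕ) : CSym F n → ℕ
  | op b f => arF b f
  | gen _ => 0
  | ind _ => 0

/-- Which of the four component signatures a symbol belongs to:
`0 = Σ₁`, `1 = Σ₂`, `2 = Σ₃`, `3 = Σ₄`. -/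
def sig : CSym F n → Fin 4
  | op false _ => 0
  | op true _ => 1
  | gen _ => 2
  | ind _ => 3

end CSym
section Setup

variable (F : Bool → Type) (arF : ∀ b, F b → ℕ) (n : ℕ)

/-- Closed terms over the combined signature `Σ = Σ₁ ∪ Σ₂ ∪ Σ₃ ∪ Σ₄`. -/
abbrev CT := Tm (CSym F n) (CSym.arity arF) Empty

/-- The root symbol of a closed term. -/
def rootSym : CT F arF n → CSym F n
  | .var v => v.elim
  | .app f _ => f

/-- All symbols of the closed term satisfy the predicate `P`. -/
def InSig (P : CSym F n → Prop) : CT F arF n → Prop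
  | .var v => v.elim
  | .app f ts => P f ∧ ∀ i, InSig P (ts i)

/-- A closed term is pure if all of its symbols belong to a single one of the
four component signatures. -/
def IsPure (t : CT F arF n) : Prop := ∃ k : Fin 4, InSig F arF n (fun s => s.sig = k) t

/-- The rank of a closed term: `0` if pure, and otherwise `1` plus the maximal
rank of its alien subterms. -/
def rank : CT F arF n → ℕ
  | .var v => v.elim
  | .app f ts =>
      Finset.univ.sup fun i =>
        rank (ts i) + (if (rootSym F arF n (ts i)).sig = f.sig then 0 else 1)

/-- The maximal subterms of `t` whose root is outside signature `k`. -/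
def aliensUnder (k : Fin 4) : CT F arF n → Set (CT F arF n)
  | .var v => v.elim
  | .app f ts =>
      if f.sig = k then ⋃ i, aliensUnder k (ts i) else {Tm.app f ts}

/-- The alien subterms of a closed term (relative to the signature of its root). -/
def aliensSet : CT F arF n → Set (CT F arF n)
  | .var v => v.elim
  | .app f ts => ⋃ i, aliensUnder F arF n f.sig (ts i)

/-- All alien subterms at arbitrary depth. -/
def allAliensSet : CT F arF n → Set (CT F arF n)
  | .var v => v.elim
  | .app f ts =>
      ⋃ i, (if (rootSym F arF n (ts i)).sig = f.sig then (∅ : Set _) else {ts i}) ∪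
        allAliensSet (ts i)

/-- View a closed combined term through the layer of theory `b`: keep the
top part built from `Σ_b`-symbols and regard the maximal non-`Σ_b`-rooted
subterms as opaque constants. -/
def layerize (b : Bool) : CT F arF n → Tm (F b) (arF b) (CT F arF n)
  | .app (.op b' f) ts =>
      if h : b' = b then h ▸ (Tm.app f (fun i => layerize b' (ts i)))
      else Tm.var (Tm.app (.op b' f) ts)
  | t => Tm.var t

end Setup
section Setup2

variable (F : Bool → Type) (arF : ∀ b, F b → ℕ) (n : ℕ)
variable (Ax : ∀ b, Set (Tm (F b) (arF b) ℕ × Tm (F b) (arF b) ℕ))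

mutual
/-- The isomorphism relation `≅` on closed combined terms, defined together
with the layer congruences: two terms are isomorphic iff their roots lie in the
same component signature and their alien abstractions are congruent modulo the
corresponding theory (for the constant signatures `Σ₃, Σ₄` this is syntactic
equality). -/
inductive Iso : CT F arF n → CT F arF n → Prop where
  | opEq (b : Bool) (u v : CT F arF n) :
      (∃ g : F b, rootSym F arF n u = .op b g) →
      (∃ g : F b, rootSym F arF n v = .op b g) →
      LEq b (layerize F arF n b u) (layerize F arF n b v) → Iso u v
  | constEq (t : CT F arF n) :
      ((rootSym F arF n t).sig = 2 ∨ (rootSym F arF n t).sig = 3) → Iso t t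

/-- The congruence `≈_b` on `Σ_b`-terms whose constants are closed combined
terms (representing their `≅`-classes): generated by the substitution instances
of the axioms of `𝕋_b` together with the identification of `≅`-related
constants. -/
inductive LEq : (b : Bool) →
    Tm (F b) (arF b) (CT F arF n) → Tm (F b) (arF b) (CT F arF n) → Prop where
  | refl (b) (t) : LEq b t t
  | symm {b s t} : LEq b s t → LEq b t s
  | trans {b s t u} : LEq b s t → LEq b t u → LEq b s u
  | congr (b) (g : F b) (ts us : Fin (arF b g) → Tm (F b) (arF b) (CT F arF n)) :
      (∀ i, LEq b (ts i) (us i)) → LEq b (.app g ts) (.app g us)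
  | varRel (b) (s t : CT F arF n) : Iso s t → LEq b (.var s) (.var t)
  | ax (b) (u v : Tm (F b) (arF b) ℕ) : (u, v) ∈ Ax b →
      ∀ σ : ℕ → Tm (F b) (arF b) (CT F arF n), LEq b (u.bind σ) (v.bind σ)
end

end Setup2
section Setup3

variable (F : Bool → Type) (arF : ∀ b, F b → ℕ) (n : ℕ)
variable (Ax : ∀ b, Set (Tm (F b) (arF b) ℕ × Tm (F b) (arF b) ℕ))

/-- The combined algebra `𝒜 = Term^c(Σ)/≅`. -/
abbrev Alg := Quot (Iso F arF n Ax)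

/-- Provable equality in the theory `𝕋_b` on terms with variables (equivalently
the smallest `Σ_b`-congruence containing all substitution instances of the
axioms of `𝕋_b`); with `V := Alg` this is the congruence `≈_b` on
`Term^c(Σ_b, Term^c(Σ)/≅)`. -/
inductive AxCong (b : Bool) {V : Type} : Tm (F b) (arF b) V → Tm (F b) (arF b) V → Prop where
  | refl (t) : AxCong b t t
  | symm {s t} : AxCong b s t → AxCong b t s
  | trans {s t u} : AxCong b s t → AxCong b t u → AxCong b s u
  | congr (g : F b) (ts us : Fin (arF b g) → Tm (F b) (arF b) V) :
      (∀ i, AxCong b (ts i) (us i)) → AxCong b (.app g ts) (.app g us)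
  | ax (u v : Tm (F b) (arF b) ℕ) : (u, v) ∈ Ax b →
      ∀ σ : ℕ → Tm (F b) (arF b) V, AxCong b (u.bind σ) (v.bind σ)

/-- Abstraction of alien subterms: `[t]ᵇ_≅ ∈ Term^c(Σ_b, Term^c(Σ)/≅)`. -/
def absQ (b : Bool) (t : CT F arF n) : Tm (F b) (arF b) (Alg F arF n Ax) :=
  (layerize F arF n b t).mapVar (Quot.mk _)

attribute [local instance] Classical.propDecidable

/-- The interpretation `t^𝒜` of a closed combined term in the combined algebra:
a term collapses to (the class of) an alien subterm whose class its alien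
abstraction is `≈_b`-congruent to, and is interpreted by its own class
otherwise. -/
noncomputable def interp : CT F arF n → Alg F arF n Ax
  | .app (.op b g) ts =>
      let t' : CT F arF n := .app (.op b g) (fun i => (interp (ts i)).out)
      if h : ∃ u, u ∈ aliensSet F arF n t' ∧
          AxCong F arF Ax b (absQ F arF n Ax b t') (.var (Quot.mk _ u))
      then Quot.mk _ h.choose
      else Quot.mk _ t'
  | t => Quot.mk _ t

end Setup3
section Setup4

variable (F : Bool → Type) (arF : ∀ b, F b → ℕ) (n : ℕ)
variable (Ax : ∀ b, Set (Tm (F b) (arF b) ℕ × Tm (F b) (arF b) ℕ))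

/-- Substitution of a closed term `w` for the indeterminate constant `x_j` in a
closed combined term. -/
def substInd (j : ℕ) (w : CT F arF n) : CT F arF n → CT F arF n
  | .var v => v.elim
  | .app (.ind j') ts => if j' = j then w else .app (.ind j') ts
  | .app f ts => .app f (fun i => substInd j w (ts i))

/-- The indeterminate constant `x_i` as a closed term (`x = xTm 0`). -/
def xTm (i : ℕ) : CT F arF n := .app (.ind i) Fin.elim0

/-- Replace every indeterminate constant occurring in a term by `x`. -/
def indToX : CT F arF n → CT F arF n
  | .var v => v.elim
  | .app (.ind _) _ => xTm F arF n 0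
  | .app f ts => .app f (fun i => indToX (ts i))

/-- Embedding of `Σ_b`-terms into combined terms. -/
def embedOp (b : Bool) {V : Type} : Tm (F b) (arF b) V → Tm (CSym F n) (CSym.arity arF) V
  | .var v => .var v
  | .app g ts => .app (.op b g) (fun i => embedOp b (ts i))

/-- Provable equality for the (combination of the) theories `𝕋_b` (`b ∈ B`) on
closed terms over the sub-signature of symbols satisfying `P`: the smallest
congruence on that set of closed terms containing all substitution instances
(by closed terms over the sub-signature) of the axioms. -/
inductive PE (B : Set Bool) (P : CSym F n → Prop) : CT F arF n → CT F arF n → Prop where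
  | refl (t) : InSig F arF n P t → PE B P t t
  | symm {s t} : PE B P s t → PE B P t s
  | trans {s t u} : PE B P s t → PE B P t u → PE B P s u
  | congr (f : CSym F n) (ts us : Fin (CSym.arity arF f) → CT F arF n) : P f →
      (∀ i, PE B P (ts i) (us i)) → PE B P (.app f ts) (.app f us)
  | ax (b : Bool) (hb : b ∈ B) (u v : Tm (F b) (arF b) ℕ) (h : (u, v) ∈ Ax b)
      (σ : ℕ → CT F arF n) : (∀ m, InSig F arF n P (σ m)) →
      PE B P ((embedOp F arF n b u).bind σ) ((embedOp F arF n b v).bind σ)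

/-- The sub-signature consisting of the operations of the theories in `B`, all
generator constants `y₁,…,yₙ`, and the indeterminates `x_j` with `j ∈ J`. -/
def SigP (B : Set Bool) (J : Set ℕ) : CSym F n → Prop
  | .op b _ => b ∈ B
  | .gen _ => True
  | .ind j => j ∈ J

/-- The (combination of the) theories in `B` is non-trivial: it does not prove
the equation `x = y` for distinct variables (equivalently, it does not identify
two distinct indeterminate constants). -/
def Nontriv (B : Set Bool) : Prop :=
  ¬ PE F arF n Ax B (SigP F n B Set.univ) (xTm F arF n 1) (xTm F arF n 2)

/-- Membership of (the class of) `t` in the logical isotropy group of the free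
model on `n` generators of the combination of the theories in `B`: `t` is a
closed term over the signature extended by the constant `x` that is invertible
under substitution into `x` and commutes generically with every operation. -/
def GIso (B : Set Bool) (t : CT F arF n) : Prop :=
  InSig F arF n (SigP F n B {0}) t ∧
  (∃ tinv, InSig F arF n (SigP F n B {0}) tinv ∧
    PE F arF n Ax B (SigP F n B {0}) (substInd F arF n 0 tinv t) (xTm F arF n 0) ∧
    PE F arF n Ax B (SigP F n B {0}) (substInd F arF n 0 t tinv) (xTm F arF n 0)) ∧
  ∀ b, b ∈ B → ∀ g : F b,
    PE F arF n Ax B (SigP F n B {j | 1 ≤ j ∧ j ≤ arF b g})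
      (substInd F arF n 0 (.app (.op b g) (fun i => xTm F arF n (i.val + 1))) t)
      (.app (.op b g) (fun i => substInd F arF n 0 (xTm F arF n (i.val + 1)) t))

/-- `g` is a projection in `𝕋_b`. -/
def IsProj (b : Bool) (g : F b) : Prop :=
  ∃ i : Fin (arF b g),
    AxCong F arF Ax b (V := ℕ) (.app g (fun j => .var j.val)) (.var i.val)

/-- `g` is constant in `𝕋_b`: `𝕋_b` proves `g(y₁,…,y_m) = s` for pairwise
distinct variables none of which occurs in `s`. -/
def IsConst (b : Bool) (g : F b) : Prop :=
  ∃ s : Tm (F b) (arF b) ℕ, s.VarsIn {m | arF b g ≤ m} ∧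
    AxCong F arF Ax b (V := ℕ) (.app g (fun j => .var j.val)) s

end Setup4
section Models

variable (F : Bool → Type) (arF : ∀ b, F b → ℕ) (n : ℕ)
variable (Ax : ∀ b, Set (Tm (F b) (arF b) ℕ × Tm (F b) (arF b) ℕ))

/-- Evaluation of a `Σ_b`-term in a set equipped with operations. -/
def evalTm {α : Type} (ops : ∀ b (g : F b), (Fin (arF b g) → α) → α)
    (b : Bool) {V : Type} (ρ : V → α) : Tm (F b) (arF b) V → α
  | .var v => ρ v
  | .app g ts => ops b g (fun i => evalTm ops b ρ (ts i))

/-- A (set-based) model of the combined theory `𝕋₁ + 𝕋₂`. -/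
structure TModel where
  carrier : Type
  ops : ∀ b (g : F b), (Fin (arF b g) → carrier) → carrier
  sat : ∀ b u v, (u, v) ∈ Ax b → ∀ ρ : ℕ → carrier,
      evalTm F arF ops b ρ u = evalTm F arF ops b ρ v

/-- Homomorphisms of models. -/
@[ext]
structure TModelHom (M N : TModel F arF Ax) where
  toFun : M.carrier → N.carrier
  map_ops : ∀ b (g : F b) (args : Fin (arF b g) → M.carrier),
      toFun (M.ops b g args) = N.ops b g (fun i => toFun (args i))

/-- The identity homomorphism. -/
def TModelHom.id (M : TModel F arF Ax) : TModelHom F arF Ax M M :=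
  ⟨fun a => a, fun _ _ _ => rfl⟩

/-- Composition of homomorphisms. -/
def TModelHom.comp {M M' M'' : TModel F arF Ax} (h' : TModelHom F arF Ax M' M'')
    (h : TModelHom F arF Ax M M') : TModelHom F arF Ax M M'' :=
  ⟨fun a => h'.toFun (h.toFun a), fun b g args => by
    simp [h.map_ops, h'.map_ops]⟩

/-- `M` together with the `n` elements `gens` is a free model on `n`
generators: the universal property. -/
def IsFreeOn (M : TModel F arF Ax) (gens : Fin n → M.carrier) : Prop :=
  ∀ (N : TModel F arF Ax) (a : Fin n → N.carrier),
    ∃! h : TModelHom F arF Ax M N, ∀ i, h.toFun (gens i) = a i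

end Models

section Helpers

namespace GI

/-- The set of variables of a term. -/
def vars {S : Type} {ar : S → ℕ} {V : Type} : Tm S ar V → Set V
  | .var v => {v}
  | .app _ ts => ⋃ i, vars (ts i)

theorem vars_finite {S : Type} {ar : S → ℕ} {V : Type} (r : Tm S ar V) : (vars r).Finite := by
  induction r with
  | var v => exact Set.finite_singleton v
  | app f ts ih => exact Set.finite_iUnion ih

theorem mem_vars_bind {S : Type} {ar : S → ℕ} {V W : Type} (r : Tm S ar V)
    (σ : V → Tm S ar W) (w : W) : w ∈ vars (r.bind σ) ↔ ∃ v ∈ vars r, w ∈ vars (σ v) := by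
  induction r with
  | var v => simp [Tm.bind, vars]
  | app f ts ih =>
    simp only [Tm.bind, vars, Set.mem_iUnion, ih]
    constructor
    · rintro ⟨i, v, hv, hw⟩
      exact ⟨v, ⟨i, hv⟩, hw⟩
    · rintro ⟨v, ⟨i, hv⟩, hw⟩
      exact ⟨i, v, hv, hw⟩

theorem bind_congr {S : Type} {ar : S → ℕ} {V W : Type} (r : Tm S ar V)
    (σ τ : V → Tm S ar W) (h : ∀ v ∈ vars r, σ v = τ v) : r.bind σ = r.bind τ := by
  induction r with
  | var v => exact h v rfl
  | app f ts ih =>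
    simp only [Tm.bind]
    congr 1
    funext i
    exact ih i (fun v hv => h v (Set.mem_iUnion.2 ⟨i, hv⟩))

theorem bind_var {S : Type} {ar : S → ℕ} {V : Type} (r : Tm S ar V) :
    r.bind Tm.var = r := by
  induction r with
  | var v => rfl
  | app f ts ih => simp only [Tm.bind, ih]

theorem bind_bind {S : Type} {ar : S → ℕ} {V W Z : Type} (r : Tm S ar V)
    (σ : V → Tm S ar W) (τ : W → Tm S ar Z) :
    (r.bind σ).bind τ = r.bind (fun v => (σ v).bind τ) := by
  induction r with
  | var v => rfl
  | app f ts ih => simp only [Tm.bind, ih]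

theorem varsIn_iff {S : Type} {ar : S → ℕ} {V : Type} (r : Tm S ar V) (A : Set V) :
    r.VarsIn A ↔ vars r ⊆ A := by
  induction r with
  | var v => simp [Tm.VarsIn, vars]
  | app f ts ih => simp [Tm.VarsIn, vars, ih]

variable {F : Bool → Type} {arF : ∀ b, F b → ℕ}
variable {Ax : ∀ b, Set (Tm (F b) (arF b) ℕ × Tm (F b) (arF b) ℕ)}

theorem axCong_bind {b : Bool} {V W : Type} {s t : Tm (F b) (arF b) V}
    (h : AxCong F arF Ax b s t) (τ : V → Tm (F b) (arF b) W) :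
    AxCong F arF Ax b (s.bind τ) (t.bind τ) := by
  induction h with
  | refl t => exact .refl _
  | symm _ ih => exact .symm ih
  | trans _ _ ih1 ih2 => exact .trans ih1 ih2
  | congr g ts us _ ih => exact .congr g _ _ ih
  | ax u v huv σ =>
    rw [bind_bind, bind_bind]
    exact .ax u v huv _

theorem evalTm_bind {α : Type} (ops : ∀ b (g : F b), (Fin (arF b g) → α) → α) (b : Bool)
    {V W : Type} (r : Tm (F b) (arF b) V) (σ : V → Tm (F b) (arF b) W) (ρ : W → α) :
    evalTm F arF ops b ρ (r.bind σ) = evalTm F arF ops b (fun v => evalTm F arF ops b ρ (σ v)) r := by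
  induction r with
  | var v => rfl
  | app g ts ih => simp only [Tm.bind, evalTm, ih]

theorem evalTm_congr {α : Type} (ops : ∀ b (g : F b), (Fin (arF b g) → α) → α) (b : Bool)
    {V : Type} (r : Tm (F b) (arF b) V) (ρ ρ' : V → α) (h : ∀ v ∈ vars r, ρ v = ρ' v) :
    evalTm F arF ops b ρ r = evalTm F arF ops b ρ' r := by
  induction r with
  | var v => exact h v rfl
  | app g ts ih =>
    simp only [evalTm]
    congr 1
    funext i
    exact ih i (fun v hv => h v (Set.mem_iUnion.2 ⟨i, hv⟩))

theorem axCong_sound (M : TModel F arF Ax) {b : Bool} {V : Type} {s t : Tm (F b) (arF b) V}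
    (h : AxCong F arF Ax b s t) (ρ : V → M.carrier) :
    evalTm F arF M.ops b ρ s = evalTm F arF M.ops b ρ t := by
  induction h with
  | refl t => rfl
  | symm _ ih => exact ih.symm
  | trans _ _ ih1 ih2 => exact ih1.trans ih2
  | congr g ts us _ ih => simp only [evalTm, ih]
  | ax u v huv σ =>
    rw [evalTm_bind, evalTm_bind]
    exact M.sat b u v huv _

variable (F arF Ax) in
/-- The hypothesis of the main theorem. -/
def Hyp : Prop :=
  ∀ b, ∃ g : F b, 1 ≤ arF b g ∧ ¬ IsProj F arF Ax b g ∧ ¬ IsConst F arF Ax b g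

theorem nontriv (hyp : Hyp F arF Ax) {b : Bool} {V : Type} {u v : V}
    (h : AxCong F arF Ax b (Tm.var u) (Tm.var v)) : u = v := by
  classical
  by_contra hne
  obtain ⟨g, h1, hp, -⟩ := hyp b
  apply hp
  refine ⟨⟨0, h1⟩, ?_⟩
  have := axCong_bind h
    (fun w => if w = u then Tm.app g (fun j => .var j.val) else (.var 0 : Tm (F b) (arF b) ℕ))
  simpa [Tm.bind, Ne.symm hne] using this

theorem exists_rep (hyp : Hyp F arF Ax) {b : Bool} {V : Type} (x0 : V) (r : Tm (F b) (arF b) V) :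
    ∃ s, AxCong F arF Ax b s r ∧
      (∀ r', AxCong F arF Ax b r r' → vars s ⊆ vars r' ∪ {x0}) ∧
      (∀ v, AxCong F arF Ax b r (.var v) → s = .var v) := by
  classical
  have key : ∀ (s r' : Tm (F b) (arF b) V) (w : V), AxCong F arF Ax b s r' →
      AxCong F arF Ax b (s.bind (fun v => if v ∈ vars r' then .var v else .var w)) r' := by
    intro s r' w h
    have h2 := axCong_bind h (fun v => if v ∈ vars r' then Tm.var v else Tm.var w)
    have : r'.bind (fun v => if v ∈ vars r' then Tm.var v else Tm.var w) = r' := by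
      conv_rhs => rw [← bind_var r']
      exact bind_congr _ _ _ (fun v hv => by simp [hv])
    rwa [this] at h2
  by_cases hv : ∃ v, AxCong F arF Ax b r (.var v)
  · obtain ⟨v, hv⟩ := hv
    refine ⟨.var v, hv.symm, ?_, ?_⟩
    · intro r' hr' w hw
      have hw' : w = v := hw
      subst hw'
      by_contra hmem
      simp only [Set.mem_union, Set.mem_singleton_iff, not_or] at hmem
      have h1 : AxCong F arF Ax b (.var w) r' := hv.symm.trans hr'
      have h2 := key _ _ x0 h1
      simp only [Tm.bind, if_neg hmem.1] at h2
      exact hmem.2 (nontriv hyp (h1.trans h2.symm))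
    · intro v' hv'
      rw [nontriv hyp (hv.symm.trans hv')]
  · obtain ⟨s, hs, hmin⟩ := exists_minimalFor_of_wellFoundedLT
      (fun s => AxCong F arF Ax b s r) (fun s => (vars s \ {x0}).ncard) ⟨r, .refl r⟩
    refine ⟨s, hs, ?_, fun v h => (hv ⟨v, h⟩).elim⟩
    intro r' hr'
    by_contra hsub
    obtain ⟨w, hw, hwn⟩ := Set.not_subset.1 hsub
    simp only [Set.mem_union, Set.mem_singleton_iff, not_or] at hwn
    have h1 := key s r' x0 (hs.trans hr')
    set s' := s.bind (fun v => if v ∈ vars r' then Tm.var v else Tm.var x0) with hs'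
    have hlt : (vars s' \ {x0}).ncard < (vars s \ {x0}).ncard := by
      apply Set.ncard_lt_ncard _ ((vars_finite s).subset Set.sdiff_subset)
      have hss : ∀ z ∈ vars s', z ≠ x0 → z ∈ vars s ∧ z ∈ vars r' := by
        intro z hz hz0
        rw [hs', mem_vars_bind] at hz
        obtain ⟨v, hv, hz⟩ := hz
        split_ifs at hz with hvr
        · have : z = v := hz
          subst this
          exact ⟨hv, hvr⟩
        · exact (hz0 hz).elim
      refine ⟨fun z hz => ⟨(hss z hz.1 hz.2).1, hz.2⟩, fun hcon => ?_⟩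
      have := hcon ⟨hw, hwn.2⟩
      exact hwn.1 (hss w this.1 this.2).2
    exact absurd (hmin (h1.trans hr'.symm) hlt.le) (not_le.2 hlt)

theorem exists_nf (hyp : Hyp F arF Ax) (V : Type) (x0 : V) (b : Bool) :
    ∃ nf : Tm (F b) (arF b) V → Tm (F b) (arF b) V,
      (∀ r, AxCong F arF Ax b (nf r) r) ∧
      (∀ r r', AxCong F arF Ax b r r' → nf r = nf r') ∧
      (∀ r, vars (nf r) ⊆ vars r ∪ {x0}) ∧
      (∀ r v, AxCong F arF Ax b r (.var v) → nf r = .var v) := by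
  classical
  let S : Setoid (Tm (F b) (arF b) V) :=
    ⟨AxCong F arF Ax b, ⟨.refl, .symm, .trans⟩⟩
  choose rep h1 h2 h3 using exists_rep hyp (b := b) x0
  have hout : ∀ r, AxCong F arF Ax b (Quotient.mk S r).out r := fun r => Quotient.mk_out (s := S) r
  refine ⟨fun r => rep (Quotient.mk S r).out, fun r => (h1 _).trans (hout r), ?_,
    fun r => h2 _ _ (hout r), fun r v h => h3 _ _ ((hout r).trans h)⟩
  intro r r' h
  have : Quotient.mk S r = Quotient.mk S r' := Quotient.sound h
  simp only [this]

variable (F arF) in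
/-- Raw layered terms. -/
inductive U : Type
  | x : ℕ → U
  | leaf : U → U
  | op : (b : Bool) → (g : F b) → (Fin (arF b g) → U) → U

/-- The root theory. -/
def root : U F arF → Option Bool
  | .x _ => none
  | .leaf _ => none
  | .op b _ _ => some b

/-- The number of layers. -/
def ht : U F arF → ℕ
  | .x _ => 0
  | .leaf u => ht u + 1
  | .op _ _ ts => max 1 (Finset.univ.sup fun i => ht (ts i))

/-- Code a layer as a raw layered term. -/
def code (b : Bool) : Tm (F b) (arF b) (U F arF) → U F arF
  | .var u => .leaf u
  | .app g ts => .op b g (fun i => code b (ts i))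

theorem code_inj (b : Bool) : ∀ r r' : Tm (F b) (arF b) (U F arF), code b r = code b r' → r = r' := by
  intro r
  induction r with
  | var u =>
    intro r' h
    cases r' with
    | var v => simpa [code] using h
    | app g ts => simp [code] at h
  | app g ts ih =>
    intro r' h
    cases r' with
    | var v => simp [code] at h
    | app g' ts' =>
      simp only [code, U.op.injEq, heq_eq_eq, true_and] at h
      obtain ⟨hg, hts⟩ := h
      subst hg
      congr 1
      funext i
      exact ih i _ (congrFun (eq_of_heq hts) i)

theorem ht_code_le (b : Bool) (r : Tm (F b) (arF b) (U F arF)) (m : ℕ) :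
    ht (code b r) ≤ m + 1 ↔ ∀ v ∈ vars r, ht v ≤ m := by
  induction r with
  | var u => simp [code, ht, vars]
  | app g ts ih =>
    simp only [code, ht, vars, max_le_iff, Finset.sup_le_iff, Finset.mem_univ, true_implies, ih,
      Set.mem_iUnion]
    constructor
    · rintro ⟨-, h⟩ v ⟨i, hi⟩
      exact h i v hi
    · intro h
      exact ⟨by omega, fun i v hv => h v ⟨i, hv⟩⟩

/-- Encode a term, a variable being encoded as itself. -/
def enc (b : Bool) : Tm (F b) (arF b) (U F arF) → U F arF
  | .var u => u
  | .app g ts => code b (.app g ts)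

open Classical in
/-- Decode the top layer of theory `b`. -/
noncomputable def dec (b : Bool) (u : U F arF) : Tm (F b) (arF b) (U F arF) :=
  if h : ∃ r, code b r = u ∧ root u = some b then h.choose else .var u

theorem dec_code (b : Bool) (g : F b) (ts) : dec b (code b (.app g ts) : U F arF) = .app g ts := by
  have h : ∃ r, code b r = (code b (.app g ts) : U F arF) ∧
      root (code b (.app g ts) : U F arF) = some b := ⟨_, rfl, rfl⟩
  unfold dec
  rw [dif_pos h]
  exact code_inj b _ _ h.choose_spec.1

theorem dec_of_root_ne (b : Bool) (u : U F arF) (h : root u ≠ some b) : dec b u = .var u := by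
  unfold dec
  rw [dif_neg]
  rintro ⟨r, -, h'⟩
  exact h h'

theorem dec_enc (b : Bool) (r : Tm (F b) (arF b) (U F arF))
    (h : ∀ v ∈ vars r, root v ≠ some b) : dec b (enc b r) = r := by
  cases r with
  | var u => exact dec_of_root_ne b u (h u rfl)
  | app g ts => exact dec_code b g ts

variable (nf : ∀ b, Tm (F b) (arF b) (U F arF) → Tm (F b) (arF b) (U F arF))

/-- Hereditarily normal terms. -/
inductive IsN : U F arF → Prop
  | x (i : ℕ) : IsN (.x i)
  | node (b : Bool) (g : F b) (ts : Fin (arF b g) → Tm (F b) (arF b) (U F arF)) :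
      nf b (.app g ts) = .app g ts →
      (∀ v ∈ vars (Tm.app g ts), IsN v) →
      (∀ v ∈ vars (Tm.app g ts), root v ≠ some b) → IsN (code b (.app g ts))

variable (F arF Ax) in
/-- Specification of the normal form functions. -/
structure NF : Prop where
  cong : ∀ b r, AxCong F arF Ax b (nf b r) r
  eq : ∀ b r r', AxCong F arF Ax b r r' → nf b r = nf b r'
  sub : ∀ b r, vars (nf b r) ⊆ vars r ∪ {U.x 0}
  var : ∀ b r v, AxCong F arF Ax b r (.var v) → nf b r = .var v

variable {nf}

theorem dec_vars {b : Bool} {u : U F arF} (hu : IsN nf u) :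
    ∀ v ∈ vars (dec b u), IsN nf v ∧ root v ≠ some b ∧ ht v ≤ ht u := by
  by_cases hr : root u = some b
  · cases hu with
    | x i => simp [root] at hr
    | node b' g ts h1 h2 h3 =>
      have : b' = b := by simpa [root, code] using hr
      subst this
      rw [dec_code]
      intro v hv
      refine ⟨h2 v hv, h3 v hv, ?_⟩
      have h4 := (ht_code_le b' (.app g ts) (ht (code b' (.app g ts)))).1 (by omega)
      exact h4 v hv
  · rw [dec_of_root_ne b u hr]
    intro v hv
    have : v = u := hv
    subst this
    exact ⟨hu, hr, le_rfl⟩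

theorem nf_dec (hnf : NF F arF Ax nf) {b : Bool} {u : U F arF} (hu : IsN nf u) :
    nf b (dec b u) = dec b u := by
  by_cases hr : root u = some b
  · cases hu with
    | x i => simp [root] at hr
    | node b' g ts h1 h2 h3 =>
      have : b' = b := by simpa [root, code] using hr
      subst this
      rw [dec_code, h1]
  · rw [dec_of_root_ne b u hr]
    exact hnf.var b _ _ (.refl _)

theorem enc_dec {b : Bool} {u : U F arF} (hu : IsN nf u) : enc b (dec b u) = u := by
  by_cases hr : root u = some b
  · cases hu with
    | x i => simp [root] at hr
    | node b' g ts h1 h2 h3 =>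
      have : b' = b := by simpa [root, code] using hr
      subst this
      rw [dec_code]
      rfl
  · rw [dec_of_root_ne b u hr]
    rfl

theorem nf_nf (hnf : NF F arF Ax nf) (b : Bool) (r) : nf b (nf b r) = nf b r :=
  hnf.eq b _ _ (hnf.cong b r)

theorem nf_vars (hnf : NF F arF Ax nf) (b : Bool) (r : Tm (F b) (arF b) (U F arF)) (m : ℕ)
    (h : ∀ v ∈ vars r, IsN nf v ∧ root v ≠ some b ∧ ht v ≤ m) :
    ∀ v ∈ vars (nf b r), IsN nf v ∧ root v ≠ some b ∧ ht v ≤ m := by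
  intro v hv
  rcases hnf.sub b r hv with h1 | h1
  · exact h v h1
  · have : v = U.x 0 := h1
    subst this
    exact ⟨.x 0, by simp [root], by simp [ht]⟩

theorem nf_vars' (hnf : NF F arF Ax nf) (b : Bool) (r : Tm (F b) (arF b) (U F arF))
    (h : ∀ v ∈ vars r, IsN nf v ∧ root v ≠ some b) :
    ∀ v ∈ vars (nf b r), IsN nf v ∧ root v ≠ some b := by
  intro v hv
  rcases hnf.sub b r hv with h1 | h1
  · exact h v h1
  · have : v = U.x 0 := h1
    subst this
    exact ⟨.x 0, by simp [root]⟩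

theorem isN_enc (b : Bool) (r : Tm (F b) (arF b) (U F arF)) (hr : nf b r = r)
    (h : ∀ v ∈ vars r, IsN nf v ∧ root v ≠ some b) : IsN nf (enc b r) := by
  cases r with
  | var u => exact (h u rfl).1
  | app g ts => exact .node b g ts hr (fun v hv => (h v hv).1) (fun v hv => (h v hv).2)

/-- The result of an operation on normal terms. -/
noncomputable def opU (nf : ∀ b, Tm (F b) (arF b) (U F arF) → Tm (F b) (arF b) (U F arF))
    (b : Bool) (g : F b) (a : Fin (arF b g) → U F arF) : U F arF :=
  enc b (nf b (.app g (fun i => dec b (a i))))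

theorem isN_opU (hnf : NF F arF Ax nf) (b : Bool) (g : F b) (a : Fin (arF b g) → U F arF)
    (ha : ∀ i, IsN nf (a i)) : IsN nf (opU nf b g a) := by
  apply isN_enc b _ (nf_nf hnf b _)
  apply nf_vars' hnf
  intro v hv
  obtain ⟨i, hi⟩ := Set.mem_iUnion.1 hv
  have := dec_vars (ha i) v hi
  exact ⟨this.1, this.2.1⟩

/-- Operations on the type of normal terms. -/
noncomputable def opN (hnf : NF F arF Ax nf) (b : Bool) (g : F b)
    (a : Fin (arF b g) → {u : U F arF // IsN nf u}) : {u : U F arF // IsN nf u} :=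
  ⟨opU nf b g (fun i => (a i).1), isN_opU hnf b g _ (fun i => (a i).2)⟩

theorem eval_opN (hnf : NF F arF Ax nf) (b : Bool) {V : Type} (ρ : V → {u : U F arF // IsN nf u})
    (r : Tm (F b) (arF b) V) :
    (evalTm F arF (opN hnf) b ρ r).1 = enc b (nf b (r.bind (fun v => dec b (ρ v).1))) := by
  induction r with
  | var v =>
    simp only [evalTm, Tm.bind]
    rw [nf_dec hnf (ρ v).2, enc_dec (ρ v).2]
  | app g ts ih =>
    simp only [evalTm, Tm.bind, opN, opU, ih]
    congr 1
    apply hnf.eq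
    apply AxCong.congr
    intro i
    rw [dec_enc]
    · exact hnf.cong b _
    · intro v hv
      refine (nf_vars' hnf b _ ?_ v hv).2
      intro w hw
      rw [mem_vars_bind] at hw
      obtain ⟨z, _, hz⟩ := hw
      have := dec_vars (ρ z).2 w hz
      exact ⟨this.1, this.2.1⟩

/-- The free model of the combined theory on the generators `x i`. -/
noncomputable def N (hnf : NF F arF Ax nf) : TModel F arF Ax where
  carrier := {u : U F arF // IsN nf u}
  ops := opN hnf
  sat := by
    intro b u v huv ρ
    apply Subtype.ext
    rw [eval_opN, eval_opN]
    congr 1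
    exact hnf.eq b _ _ (.ax u v huv _)

/-- Evaluation of raw layered terms. -/
def ev (M : TModel F arF Ax) (ρ : ℕ → M.carrier) : U F arF → M.carrier
  | .x i => ρ i
  | .leaf u => ev M ρ u
  | .op b g ts => M.ops b g (fun i => ev M ρ (ts i))

theorem ev_code (M : TModel F arF Ax) (ρ : ℕ → M.carrier) (b : Bool)
    (r : Tm (F b) (arF b) (U F arF)) :
    ev M ρ (code b r) = evalTm F arF M.ops b (ev M ρ) r := by
  induction r with
  | var u => rfl
  | app g ts ih => simp only [code, ev, evalTm, ih]

theorem ev_enc (M : TModel F arF Ax) (ρ : ℕ → M.carrier) (b : Bool)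
    (r : Tm (F b) (arF b) (U F arF)) :
    ev M ρ (enc b r) = evalTm F arF M.ops b (ev M ρ) r := by
  cases r with
  | var u => rfl
  | app g ts => exact ev_code M ρ b _

/-- The universal homomorphism. -/
noncomputable def evHom (hnf : NF F arF Ax nf) (M : TModel F arF Ax) (ρ : ℕ → M.carrier) :
    TModelHom F arF Ax (N hnf) M where
  toFun a := ev M ρ a.1
  map_ops := by
    intro b g a
    change ev M ρ (enc b (nf b (.app g (fun i => dec b (a i).1)))) = _
    rw [ev_enc, axCong_sound M (hnf.cong b _)]
    simp only [evalTm]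
    congr 1
    funext i
    rw [← ev_enc, enc_dec (a i).2]

theorem ht_eval (hnf : NF F arF Ax nf) (b : Bool) {V : Type} (ρ : V → {u : U F arF // IsN nf u})
    (g : F b) (ts : Fin (arF b g) → Tm (F b) (arF b) V) (p : ℕ)
    (h : ∀ v ∈ vars (Tm.app g ts), ht (ρ v).1 ≤ p) :
    ht (evalTm F arF (opN hnf) b ρ (.app g ts)).1 ≤ p ∨
    (root (evalTm F arF (opN hnf) b ρ (.app g ts)).1 = some b ∧
      ht (evalTm F arF (opN hnf) b ρ (.app g ts)).1 ≤ p + 1) := by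
  rw [eval_opN]
  have h1 := nf_vars hnf b ((Tm.app g ts).bind (fun v => dec b (ρ v).1)) p (by
    intro w hw
    rw [mem_vars_bind] at hw
    obtain ⟨z, hz1, hz⟩ := hw
    have := dec_vars (ρ z).2 w hz
    exact ⟨this.1, this.2.1, this.2.2.trans (h z hz1)⟩)
  generalize nf b ((Tm.app g ts).bind (fun v => dec b (ρ v).1)) = s at h1
  cases s with
  | var u => exact Or.inl (h1 u rfl).2.2
  | app g' ts' => exact Or.inr ⟨rfl, (ht_code_le b _ p).2 (fun v hv => (h1 v hv).2.2)⟩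

theorem ht_ev (hnf : NF F arF Ax nf) (ρ : ℕ → (N hnf).carrier) (m : ℕ)
    (hρ : ∀ i, ht (ρ i).1 ≤ m) (u : U F arF) (hu : IsN nf u) :
    ht (ev (N hnf) ρ u).1 ≤ ht u + m ∧
    (∀ b, root u = some b → ht (ev (N hnf) ρ u).1 + 1 ≤ ht u + m ∨
      root (ev (N hnf) ρ u).1 = some b) := by
  induction hu with
  | x i => exact ⟨by simpa [ev, ht] using hρ i, by simp [root]⟩
  | node b g ts h1 h2 h3 ih =>
    have hpos : 1 ≤ ht (code b (.app g ts)) := by simp [code, ht]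
    obtain ⟨q, hq⟩ : ∃ q, ht (code b (.app g ts)) = q + 1 :=
      ⟨_, (Nat.sub_add_cancel (by assumption)).symm⟩
    have hv := (ht_code_le b (.app g ts) q).1 hq.le
    rw [ev_code, hq]
    have := ht_eval hnf b (ev (N hnf) ρ) g ts (q + m)
      (fun v hv' => ((ih v hv').1).trans (by have := hv v hv'; omega))
    change ht (evalTm F arF (opN hnf) b (ev (N hnf) ρ) (.app g ts)).1 ≤ _ ∧ _
    refine ⟨by omega, ?_⟩
    intro b' hb'
    have hb : b = b' := by simpa [root, code] using hb'
    subst hb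
    rcases this with h | h
    · left
      change ht (evalTm F arF (opN hnf) b (ev (N hnf) ρ) (.app g ts)).1 + 1 ≤ _
      omega
    · exact Or.inr h.1

theorem root_cases {u : U F arF} (hu : IsN nf u) :
    (∃ i, u = .x i) ∨ ((∃ b, root u = some b) ∧ 1 ≤ ht u) := by
  cases hu with
  | x i => exact Or.inl ⟨i, rfl⟩
  | node b g ts _ _ _ => exact Or.inr ⟨⟨b, rfl⟩, by simp [code, ht]⟩

/-- Applying a non-constant non-projection of theory `b` to distinct elements that are not
rooted in `b` and have at least `L` layers gives an element rooted in `b` with at least `L + 1`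
layers. -/
theorem op_generic (hnf : NF F arF Ax nf) (b : Bool) (g : F b)
    (hp : ¬ IsProj F arF Ax b g) (hc : ¬ IsConst F arF Ax b g) (L : ℕ)
    (a : Fin (arF b g) → U F arF) (hinj : Function.Injective a)
    (hroot : ∀ i, root (a i) ≠ some b) (hL : ∀ i, L ≤ ht (a i)) :
    root (opU nf b g a) = some b ∧ L + 1 ≤ ht (opU nf b g a) := by
  classical
  unfold opU
  have hdec : (fun i => dec b (a i)) = fun i => Tm.var (a i) :=
    funext fun i => dec_of_root_ne b _ (hroot i)
  rw [hdec]
  have hcong := hnf.cong b (.app g (fun i => Tm.var (a i)))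
  generalize nf b (.app g (fun i => Tm.var (a i))) = s at hcong
  let τ : U F arF → Tm (F b) (arF b) ℕ := fun u =>
    if h : ∃ i, a i = u then .var h.choose.val else .var (arF b g)
  have hτa : ∀ i, τ (a i) = .var i.val := by
    intro i
    have h : ∃ j, a j = a i := ⟨i, rfl⟩
    simp only [τ, dif_pos h]
    rw [hinj h.choose_spec]
  have hτn : ∀ u, (¬ ∃ i, a i = u) → τ u = .var (arF b g) := fun u h => by simp only [τ, dif_neg h]
  have h2 := axCong_bind hcong τ
  simp only [Tm.bind, hτa] at h2
  have hex : ∃ i, a i ∈ vars s := by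
    by_contra hno
    apply hc
    refine ⟨s.bind τ, ?_, h2.symm⟩
    rw [varsIn_iff]
    intro w hw
    rw [mem_vars_bind] at hw
    obtain ⟨v, hv, hw⟩ := hw
    rw [hτn v (by rintro ⟨i, rfl⟩; exact hno ⟨i, hv⟩)] at hw
    have : w = arF b g := hw
    simp [this]
  obtain ⟨i, hi⟩ := hex
  cases s with
  | var u =>
    exfalso
    apply hp
    have : a i = u := hi
    subst this
    refine ⟨i, ?_⟩
    simp only [Tm.bind, hτa] at h2
    exact h2.symm
  | app g' ts' =>
    refine ⟨rfl, ?_⟩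
    by_contra hlt
    have hle : 1 ≤ ht (enc b (.app g' ts') : U F arF) := by simp [enc, code, ht]
    obtain ⟨q, hq⟩ : ∃ q, ht (enc b (.app g' ts') : U F arF) = q + 1 :=
      ⟨_, (Nat.sub_add_cancel (by assumption)).symm⟩
    have := (ht_code_le b (.app g' ts') q).1 hq.le (a i) hi
    have := hL i
    omega

theorem main (hyp : Hyp F arF Ax)
    (η : ∀ M : TModel F arF Ax, TModelHom F arF Ax M M)
    (hnat : ∀ (M N : TModel F arF Ax) (h : TModelHom F arF Ax M N) (a : M.carrier),
        h.toFun ((η M).toFun a) = (η N).toFun (h.toFun a))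
    (hbij : ∀ M, Function.Bijective (η M).toFun) (M : TModel F arF Ax) (a : M.carrier) :
    (η M).toFun a = a := by
  choose nf hn1 hn2 hn3 hn4 using exists_nf hyp (U F arF) (U.x 0)
  have hnf : NF F arF Ax nf := ⟨hn1, hn2, hn3, hn4⟩
  let X : ℕ → (N hnf).carrier := fun i => ⟨.x i, .x i⟩
  let σ := (η (N hnf)).toFun
  let t : ℕ → (N hnf).carrier := fun i => σ (X i)
  have hXev : ∀ (M' : TModel F arF Ax) (ρ : ℕ → M'.carrier) i,
      (evHom hnf M' ρ).toFun (X i) = ρ i := fun _ _ _ => rfl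
  suffices h0 : t 0 = X 0 by
    have := hnat (N hnf) M (evHom hnf M (fun _ => a)) (X 0)
    rw [hXev] at this
    rw [← this]
    change (evHom hnf M (fun _ => a)).toFun (t 0) = a
    rw [h0, hXev]

  have hsub : ∀ (c : (N hnf).carrier) (j : ℕ), ev (N hnf) (fun _ => c) (t j).1 = σ c := by
    intro c j
    have := hnat (N hnf) (N hnf) (evHom hnf (N hnf) (fun _ => c)) (X j)
    rw [hXev] at this
    exact this
  rcases root_cases (t 0).2 with ⟨j, hj⟩ | ⟨⟨b', hb'⟩, hpos⟩
  · have := hsub (X 0) 0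
    rw [hj] at this
    exact this.symm
  exfalso
  have hX0 : ∀ i, ht (X i).1 ≤ 0 := fun i => by simp [X, ht]
  have hle : ∀ i j, ht (t i).1 ≤ ht (t j).1 := by
    intro i j
    have := (ht_ev hnf (fun _ => X i) 0 (fun _ => hX0 i) (t j).1 (t j).2).1
    rw [hsub (X i) j] at this
    exact this
  have hrt : ∀ i, root (t i).1 = some b' := by
    intro i
    have := (ht_ev hnf (fun _ => X i) 0 (fun _ => hX0 i) (t 0).1 (t 0).2).2 b' hb'
    rw [hsub (X i) 0] at this
    rcases this with h | h
    · have h1 := hle 0 i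
      change ht (t i).1 + 1 ≤ _ at h
      omega
    · exact h
  obtain ⟨g, h1, hp, hc⟩ := hyp (!b')
  have hgen := op_generic hnf (!b') g hp hc (ht (t 0).1) (fun i => (t i.val).1)
    (by
      intro i j hij
      have h2 : t i.val = t j.val := Subtype.ext hij
      have h3 := congrArg Subtype.val ((hbij (N hnf)).1 h2)
      have h4 : (i : ℕ) = j := by simpa [X] using h3
      exact Fin.ext h4)
    (by intro i; rw [hrt]; cases b' <;> simp)
    (fun i => hle 0 i)
  let c : (N hnf).carrier := (N hnf).ops (!b') g (fun i => X i.val)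
  have hcht : ht c.1 ≤ 1 := by
    have := ht_eval hnf (!b') (fun i : Fin (arF (!b') g) => X i.val) g (fun i => .var i) 0
      (fun v _ => hX0 v)
    change ht c.1 ≤ 0 ∨ _ ∧ ht c.1 ≤ 0 + 1 at this
    omega
  have hσc : (σ c).1 = opU nf (!b') g (fun i => (t i.val).1) :=
    congrArg Subtype.val ((η (N hnf)).map_ops (!b') g (fun i => X i.val))
  have hfin := (ht_ev hnf (fun _ => c) 1 (fun _ => hcht) (t 0).1 (t 0).2).2 b' hb'
  rw [hsub c 0, hσc] at hfin
  rcases hfin with h | h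
  · omega
  · rw [hgen.1] at h
    cases b' <;> simp at h

end GI

end Helpers

section Statement
variable (F : Bool → Type) (arF : ∀ b, F b → ℕ) (n : ℕ)
variable (Ax : ∀ b, Set (Tm (F b) (arF b) ℕ × Tm (F b) (arF b) ℕ))

/-- Triviality of the global isotropy group: under the hypotheses of the main
theorem, every natural automorphism of the identity functor on the category of
`(𝕋₁+𝕋₂)`-models is the identity. -/
theorem global_isotropy_trivial
    (hyp : ∀ b, ∃ g : F b, 1 ≤ arF b g ∧ ¬ IsProj F arF Ax b g ∧ ¬ IsConst F arF Ax b g) :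
    ∀ η : ∀ M : TModel F arF Ax, TModelHom F arF Ax M M,
      (∀ (M N : TModel F arF Ax) (h : TModelHom F arF Ax M N),
        TModelHom.comp F arF Ax h (η M) = TModelHom.comp F arF Ax (η N) h) →
      (∀ M, Function.Bijective (η M).toFun) →
      ∀ M, η M = TModelHom.id F arF Ax M := by
  intro η hnat hbij M
  apply TModelHom.ext
  funext a
  exact GI.main hyp η (fun M N h a => congrFun (congrArg TModelHom.toFun (hnat M N h)) a) hbij M a
end Statement
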